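/- Let G be a group and i an integer such that H^i(G, ZG) and H^{i-1}(G, ZG) are both finitely generated abelian groups. Let A be a ZG-module whose underlying abelian group is finite. Then Ext^i_{ZG}(A, ZG) is a finitely generated abelian group. -/

import Mathlib

open CategoryTheory Opposite

/-- `Ext^i_{ℤG}(A, ℤG)` as an abelian group, where `ℤG = MonoidAlgebra ℤ G` acts on
itself by left multiplication. -/
noncomputable def extZG (G : Type) [Group G] (i : ℕ)
    (A : Type) [AddCommGroup A] [Module (MonoidAlgebra ℤ G) A] : ModuleCat ℤ :=
  ((Ext ℤ (ModuleCat (MonoidAlgebra ℤ G)) i).obj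
    (op (ModuleCat.of (MonoidAlgebra ℤ G) A))).obj
    (ModuleCat.of (MonoidAlgebra ℤ G) (MonoidAlgebra ℤ G))


theorem aux_homology_fg (K : CochainComplex (ModuleCat.{0} ℤ) ℕ) (n : ℕ)
    (h : AddGroup.FG (K.homology n)) :
    ∃ S : Finset (K.X n), (∀ s ∈ S, K.d n (n+1) s = 0) ∧
      ∀ x : K.X n, K.d n (n+1) x = 0 →
        ∃ c ∈ AddSubgroup.closure (S : Set (K.X n)), ∃ (m : ℕ) (y : K.X m), x = c + K.d m n y := by
  classical
  have hsurj : Function.Surjective (K.homologyπ n) :=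
    (ModuleCat.epi_iff_surjective _).1 inferInstance
  obtain ⟨T, hT⟩ := (AddGroup.fg_def.1 h)
  choose f hf using hsurj
  have hcyc : ∀ z : K.cycles n, K.d n (n+1) (K.iCycles n z) = 0 := by
    intro z
    have := K.iCycles_d n (n+1)
    exact congrArg (fun φ => φ.hom z) this
  refine ⟨T.image (fun t => K.iCycles n (f t)), ?_, ?_⟩
  · intro s hs
    obtain ⟨t, -, rfl⟩ := Finset.mem_image.1 hs
    exact hcyc _
  · intro x hx
    have hex : ∃ z : K.cycles n, K.iCycles n z = x := by
      have := (ShortComplex.moduleCat_exact_iff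
          (ShortComplex.mk (K.iCycles n) (K.d n (n+1)) (K.iCycles_d n (n+1)))).1
        (ShortComplex.exact_of_f_is_kernel _ (K.cyclesIsKernel n (n+1) (by simp))) x hx
      exact this
    obtain ⟨z, rfl⟩ := hex
    have key : ∀ q : K.homology n, q ∈ AddSubgroup.closure (T : Set (K.homology n)) →
        ∃ c : K.cycles n, K.homologyπ n c = q ∧ K.iCycles n c ∈
          AddSubgroup.closure ((T.image (fun t => K.iCycles n (f t)) : Finset _) : Set (K.X n)) := by
      intro q hq
      induction hq using AddSubgroup.closure_induction with
      | mem t ht =>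
        refine ⟨f t, hf t, AddSubgroup.subset_closure ?_⟩
        simp only [Finset.coe_image]
        exact ⟨t, ht, rfl⟩
      | zero => exact ⟨0, by simp, by simp⟩
      | add a b _ _ ha hb =>
        obtain ⟨c, h1, h2⟩ := ha
        obtain ⟨c', h1', h2'⟩ := hb
        exact ⟨c + c', by simp [h1, h1'], by rw [map_add]; exact add_mem h2 h2'⟩
      | neg a _ ha =>
        obtain ⟨c, h1, h2⟩ := ha
        exact ⟨-c, by simp [h1], by rw [map_neg]; exact neg_mem h2⟩
    obtain ⟨c, hc1, hc2⟩ := key (K.homologyπ n z) (by rw [hT]; trivial)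
    refine ⟨_, hc2, (ComplexShape.up ℕ).prev n, ?_⟩
    have hex : ∃ y, K.toCycles ((ComplexShape.up ℕ).prev n) n y = z - c := by
      have := (ShortComplex.moduleCat_exact_iff
          (ShortComplex.mk (K.toCycles ((ComplexShape.up ℕ).prev n) n) (K.homologyπ n)
            (K.toCycles_comp_homologyπ _ n))).1
        (ShortComplex.exact_of_g_is_cokernel _ (K.homologyIsCokernel _ n rfl)) (z - c)
        (by change K.homologyπ n (z - c) = 0
            rw [map_sub, hc1, sub_self])
      exact this
    obtain ⟨y, hy⟩ := hex
    refine ⟨y, ?_⟩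
    have h3 := congrArg (fun φ => φ.hom y) (K.toCycles_i ((ComplexShape.up ℕ).prev n) n)
    have h4 : K.iCycles n (K.toCycles ((ComplexShape.up ℕ).prev n) n y) = K.d _ n y := h3
    rw [← h4, hy, map_sub]; abel

theorem aux_hom_fg {C : Type 1} [Category.{0} C] [Abelian C] [Linear ℤ C]
    (P : ChainComplex C ℕ) (W : C) (j : ℕ)
    (h : AddGroup.FG ((P.linearYonedaObj ℤ W).homology j)) :
    ∃ S : Finset (P.X j ⟶ W), (∀ s ∈ S, P.d (j+1) j ≫ s = 0) ∧
      ∀ x : P.X j ⟶ W, P.d (j+1) j ≫ x = 0 →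
        ∃ c ∈ AddSubgroup.closure (S : Set (P.X j ⟶ W)), ∃ (m : ℕ) (y : P.X m ⟶ W),
          x = c + P.d j m ≫ y :=
  aux_homology_fg _ j h

theorem aux_ext_fg0 {C D : Type 1} [Category.{0} C] [Category.{0} D] [Abelian C] [Abelian D]
    [HasExt.{0} D] [Linear ℤ C] (P : ChainComplex C ℕ) {X' : D} (Q : ProjectiveResolution X')
    (W RY : C) (Y : D) (e : ∀ n, (P.X n ⟶ RY) ≃+ (Q.complex.X n ⟶ Y))
    (hd : ∀ (m n : ℕ) (f : P.X n ⟶ RY), Q.complex.d m n ≫ e n f = e m (P.d m n ≫ f))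
    {κ : Type} [Fintype κ]
    (p : κ → (RY ⟶ W)) (q : κ → (W ⟶ RY)) (hpq : ∑ k, p k ≫ q k = 𝟙 RY)
    (j : ℕ) (h : AddGroup.FG ((P.linearYonedaObj ℤ W).homology j)) :
    AddGroup.FG (Abelian.Ext X' Y j) := by
  classical
  obtain ⟨S, hS0, hS⟩ := aux_hom_fg _ _ j h
  let θ : ∀ (n : ℕ) (k : κ), (P.X n ⟶ W) →+ (Q.complex.X n ⟶ Y) := fun n k =>
    AddMonoidHom.mk' (fun f => e n (f ≫ q k)) (by
      intro f g
      rw [Preadditive.add_comp, map_add])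
  have hθd : ∀ (m n : ℕ) (k : κ) (f : P.X n ⟶ W),
      Q.complex.d m n ≫ θ n k f = θ m k (P.d m n ≫ f) := by
    intro m n k f
    change Q.complex.d m n ≫ e n (f ≫ q k) =
      e m ((P.d m n ≫ f) ≫ q k)
    rw [hd, Category.assoc]
  have hS0' : ∀ s : S, P.d (j+1) j ≫ (s.1 : P.X j ⟶ W) = 0 :=
    fun s => hS0 s.1 s.2
  let gen : κ × S → Abelian.Ext (X') Y j := fun ks =>
    Q.extMk (θ j ks.1 ks.2.1) (j+1) rfl (by rw [hθd, hS0' ks.2, map_zero])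
  let H : AddSubgroup (Abelian.Ext (X') Y j) := AddSubgroup.closure (Set.range gen)
  let N : AddSubgroup (Q.complex.X j ⟶ Y) :=
    { carrier := {f | ∃ hf : Q.complex.d (j+1) j ≫ f = 0, Q.extMk f (j+1) rfl hf ∈ H}
      zero_mem' := ⟨by simp, by rw [Q.extMk_zero]; exact zero_mem _⟩
      add_mem' := by
        rintro a b ⟨ha, ha'⟩ ⟨hb, hb'⟩
        exact ⟨by simp [ha, hb], by rw [← Q.add_extMk _ _ _ _ ha hb]; exact add_mem ha' hb'⟩
      neg_mem' := by
        rintro a ⟨ha, ha'⟩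
        exact ⟨by simp [ha], by rw [← Q.neg_extMk _ _ _ ha]; exact neg_mem ha'⟩ }
  have hN1 : ∀ k, AddSubgroup.closure (S : Set (P.X j ⟶ W)) ≤ N.comap (θ j k) := by
    intro k
    rw [AddSubgroup.closure_le]
    intro s hs
    exact ⟨by rw [hθd, hS0' ⟨s, hs⟩, map_zero], AddSubgroup.subset_closure ⟨(k, ⟨s, hs⟩), rfl⟩⟩
  have hN2 : ∀ (m : ℕ) (g : Q.complex.X m ⟶ Y), Q.complex.d j m ≫ g ∈ N := by
    intro m g
    by_cases hm : m + 1 = j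
    · refine ⟨by simp, ?_⟩
      rw [(Q.extMk_eq_zero_iff _ _ _ _ m hm).2 ⟨g, rfl⟩]
      exact zero_mem _
    · rw [Q.complex.shape _ _ (by simpa using hm), Limits.zero_comp]
      exact zero_mem _
  have hN3 : ∀ k (z : P.X j ⟶ W), P.d (j+1) j ≫ z = 0 → θ j k z ∈ N := by
    intro k z hz
    obtain ⟨c, hc, m, y, hy⟩ := hS z hz
    have hy' : z = (c : P.X j ⟶ W) + P.d j m ≫ (y : P.X m ⟶ W) := hy
    rw [hy', map_add, ← hθd]
    exact add_mem (hN1 k hc) (hN2 _ _)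
  rw [AddGroup.fg_iff]
  refine ⟨Set.range gen, ?_, Set.finite_range _⟩
  change H = ⊤
  rw [eq_top_iff]
  rintro α -
  obtain ⟨f, hf, rfl⟩ := Q.extMk_surjective α (j+1) rfl
  suffices hfN : f ∈ N by exact hfN.2
  have hf' : P.d (j+1) j ≫ (e j).symm f = 0 := by
    have h1 := hd (j+1) j ((e j).symm f)
    rw [AddEquiv.apply_symm_apply, hf] at h1
    apply (e _).injective
    rw [← h1, map_zero]
  have hsum : f = ∑ k, θ j k ((e j).symm f ≫ p k) := by
    have h1 : (e j).symm f = ∑ k, ((e j).symm f ≫ p k) ≫ q k := by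
      simp_rw [Category.assoc]
      rw [← Preadditive.comp_sum, hpq, Category.comp_id]
    have h2 := congrArg (e j) h1
    rw [map_sum, AddEquiv.apply_symm_apply] at h2
    exact h2
  rw [hsum]
  refine sum_mem fun k _ => hN3 k _ ?_
  rw [← Category.assoc, hf', Limits.zero_comp]

theorem aux_ext_fg {C D : Type 1} [Category.{0} C] [Category.{0} D] [Abelian C] [Abelian D]
    [HasExt.{0} D] [Linear ℤ C] {L : C ⥤ D} {R : D ⥤ C} (adj : L ⊣ R) [L.Additive]
    [L.PreservesHomology] [R.PreservesEpimorphisms]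
    {X : C} (P : ProjectiveResolution X) (W : C) (Y : D) {κ : Type} [Fintype κ]
    (p : κ → (R.obj Y ⟶ W)) (q : κ → (W ⟶ R.obj Y)) (hpq : ∑ k, p k ≫ q k = 𝟙 (R.obj Y))
    (j : ℕ) (h : AddGroup.FG ((P.complex.linearYonedaObj ℤ W).homology j)) :
    AddGroup.FG (Abelian.Ext (L.obj X) Y j) := by
  have : L.PreservesProjectiveObjects := ⟨fun hP => adj.map_projective _ hP⟩
  have hadd : ∀ (A : C) (f g : A ⟶ R.obj Y),
      (adj.homEquiv _ _).symm (f + g) =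
        (adj.homEquiv _ _).symm f + (adj.homEquiv _ _).symm g := by
    intro n f g
    simp [Adjunction.homEquiv_counit]
  exact aux_ext_fg0 P.complex (L.mapProjectiveResolution P) W (R.obj Y) Y
    (fun n => { toEquiv := (adj.homEquiv (P.complex.X n) Y).symm, map_add' := hadd _ })
    (fun m n f => (adj.homEquiv_naturality_left_symm _ _).symm) p q hpq j h

theorem aux_fg_exact {A B C : Type} [AddCommGroup A] [AddCommGroup B] [AddCommGroup C]
    (f : A →+ B) (g : B →+ C) (hfg : ∀ b, g b = 0 → ∃ a, f a = b)
    (hA : AddGroup.FG A) (hC : AddGroup.FG C) : AddGroup.FG B := by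
  rw [← Module.Finite.iff_addGroup_fg] at hA hC ⊢
  have h1 : IsNoetherian ℤ g.toIntLinearMap.ker := by
    have : (g.toIntLinearMap.ker) ≤ f.toIntLinearMap.range := by
      intro b hb
      exact hfg b hb
    exact isNoetherian_of_le this
  have : IsNoetherian ℤ B :=
    isNoetherian_of_range_eq_ker g.toIntLinearMap.ker.subtype g.toIntLinearMap
      (Submodule.range_subtype _)
  infer_instance

theorem aux_les_fg {D : Type 1} [Category.{0} D] [Abelian D] [HasExt.{0} D]
    {S : ShortComplex D} (hS : S.ShortExact) (Y : D) (n : ℕ)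
    (h1 : AddGroup.FG (Abelian.Ext S.X₁ Y n)) (h2 : AddGroup.FG (Abelian.Ext S.X₂ Y (n+1))) :
    AddGroup.FG (Abelian.Ext S.X₃ Y (n+1)) := by
  refine aux_fg_exact (hS.extClass.precomp Y (add_comm 1 n))
    ((Abelian.Ext.mk₀ S.g).precomp Y (zero_add (n+1))) ?_ h1 h2
  intro b hb
  obtain ⟨x, hx⟩ := Abelian.Ext.contravariant_sequence_exact₃ hS Y b hb (add_comm 1 n)
  exact ⟨x, hx⟩

theorem aux_old_of_new {D : Type 1} [Category.{0} D] [Abelian D] [HasExt.{0} D] [Linear ℤ D]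
    [EnoughProjectives D] (X Y : D) (n : ℕ) (h : AddGroup.FG (Abelian.Ext X Y (n+1))) :
    AddGroup.FG (((Ext ℤ D (n+1)).obj (op X)).obj Y) := by
  let P : ProjectiveResolution X := projectiveResolution X
  let K := P.complex.linearYonedaObj ℤ Y
  suffices hK : AddGroup.FG (K.homology (n+1)) by
    have e := (P.isoExt (R := ℤ) (n+1) Y).symm.toLinearEquiv
    exact AddGroup.fg_of_surjective (f := e.toAddEquiv.toAddMonoidHom) e.surjective
  have hcyc : ∀ z : K.cycles (n+1),
      P.complex.d (n+2) (n+1) ≫ (K.iCycles (n+1) z : P.complex.X (n+1) ⟶ Y) = 0 := by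
    intro z
    exact congrArg (fun φ => φ.hom z) (K.iCycles_d (n+1) (n+2))
  let Ψ : K.cycles (n+1) →+ Abelian.Ext X Y (n+1) := AddMonoidHom.mk'
    (fun z => P.extMk (K.iCycles (n+1) z : P.complex.X (n+1) ⟶ Y) (n+2) rfl (hcyc z)) (by
      intro a b
      refine Eq.trans ?_ (P.add_extMk _ _ _ _ (hcyc a) (hcyc b)).symm
      congr 1
      exact map_add (K.iCycles (n+1)).hom a b)
  have hsurj : Function.Surjective Ψ := by
    intro α
    obtain ⟨f, hf, rfl⟩ := P.extMk_surjective α (n+2) rfl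
    obtain ⟨z, hz⟩ := (ShortComplex.moduleCat_exact_iff
          (ShortComplex.mk (K.iCycles (n+1)) (K.d (n+1) (n+2)) (K.iCycles_d (n+1) (n+2)))).1
        (ShortComplex.exact_of_f_is_kernel _ (K.cyclesIsKernel (n+1) (n+2) (by simp))) f hf
    refine ⟨z, ?_⟩
    change P.extMk (K.iCycles (n+1) z : P.complex.X (n+1) ⟶ Y) (n+2) rfl (hcyc z) = _
    congr 1
  have hker : ∀ z, Ψ z = 0 → K.homologyπ (n+1) z = 0 := by
    intro z hz
    obtain ⟨g, hg⟩ := (P.extMk_eq_zero_iff _ (n+2) rfl (hcyc z) n rfl).1 hz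
    have h3 : K.iCycles (n+1) (K.toCycles n (n+1) g) = K.d n (n+1) g :=
      congrArg (fun φ => φ.hom g) (K.toCycles_i n (n+1))
    have h4 : K.toCycles n (n+1) g = z := by
      apply (ModuleCat.mono_iff_injective (K.iCycles (n+1))).1 inferInstance
      rw [h3]
      exact hg
    rw [← h4]
    exact congrArg (fun φ => φ.hom g) (K.toCycles_comp_homologyπ n (n+1))
  have hπ : Function.Surjective (K.homologyπ (n+1)) :=
    (ModuleCat.epi_iff_surjective _).1 inferInstance
  have e := QuotientAddGroup.quotientKerEquivOfSurjective Ψ hsurj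
  have : AddGroup.FG (K.cycles (n+1) ⧸ Ψ.ker) :=
    AddGroup.fg_of_surjective (f := e.symm.toAddMonoidHom) e.symm.surjective
  refine AddGroup.fg_of_surjective (f := QuotientAddGroup.lift Ψ.ker
    ((K.homologyπ (n+1)).hom.toAddMonoidHom) (fun z hz => hker z hz)) ?_
  intro y
  obtain ⟨z, rfl⟩ := hπ y
  exact ⟨QuotientAddGroup.mk z, rfl⟩

theorem aux_zero_fg {D : Type 1} [Category.{0} D] [Abelian D] [Linear ℤ D]
    [EnoughProjectives D] (X Y : D) (h : ∀ f : X ⟶ Y, f = 0) :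
    AddGroup.FG (((Ext ℤ D 0).obj (op X)).obj Y) := by
  let P : ProjectiveResolution X := projectiveResolution X
  let K := P.complex.linearYonedaObj ℤ Y
  suffices hK : Subsingleton (K.homology 0) by
    have e := (P.isoExt (R := ℤ) 0 Y).toLinearEquiv
    have := e.injective.subsingleton
    infer_instance
  have hπ : Function.Surjective (K.homologyπ 0) :=
    (ModuleCat.epi_iff_surjective _).1 inferInstance
  suffices hK : Subsingleton (K.cycles 0) from hπ.subsingleton
  refine subsingleton_of_forall_eq 0 fun z => ?_
  apply (ModuleCat.mono_iff_injective (K.iCycles 0)).1 inferInstance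
  rw [map_zero]
  have hcyc : P.complex.d 1 0 ≫ (K.iCycles 0 z : P.complex.X 0 ⟶ Y) = 0 :=
    congrArg (fun φ => φ.hom z) (K.iCycles_d 0 1)
  have h0 := P.exact₀.g_desc (K.iCycles 0 z : P.complex.X 0 ⟶ Y) hcyc
  have h1 : P.exact₀.desc (K.iCycles 0 z : P.complex.X 0 ⟶ Y) hcyc = 0 := h _
  refine h0.symm.trans ?_
  refine (congrArg (fun t => P.π.f 0 ≫ t) h1).trans ?_
  exact Limits.comp_zero

noncomputable def auxP {R : Type} [CommRing R] {G : Type} [Group G] {V : Type} [AddCommGroup V] [Module R V]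
    (ρ : Representation R G V) {κ : Type} [Fintype κ] (b : Module.Basis κ R V) (k : κ) :
    (V →ₗ[R] MonoidAlgebra R G) →ₗ[R] MonoidAlgebra R G where
  toFun φ := by
    classical
    exact MonoidAlgebra.ofCoeff (Finsupp.onFinset
      (Finset.univ.biUnion fun l => (φ (b l)).coeff.support)
      (fun h => (φ (ρ h (b k))).coeff h) (by
        intro h hh
        by_contra hc
        apply hh
        have hz : ∀ l, (φ (b l)).coeff h = 0 := by
          intro l
          by_contra hl
          exact hc (Finset.mem_biUnion.2 ⟨l, Finset.mem_univ _, Finsupp.mem_support_iff.2 hl⟩)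
        rw [← b.sum_repr (ρ h (b k)), map_sum, MonoidAlgebra.coeff_sum, Finsupp.finsetSum_apply]
        refine Finset.sum_eq_zero fun l _ => ?_
        rw [map_smul, MonoidAlgebra.coeff_smul, Finsupp.smul_apply, hz, smul_zero]))
  map_add' φ ψ := by
    ext h
    simp
  map_smul' c φ := by
    ext h
    simp

theorem auxP_coeff {R : Type} [CommRing R] {G : Type} [Group G] {V : Type} [AddCommGroup V] [Module R V]
    (ρ : Representation R G V) {κ : Type} [Fintype κ] (b : Module.Basis κ R V) (k : κ)
    (φ : V →ₗ[R] MonoidAlgebra R G) (h : G) :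
    (auxP ρ b k φ).coeff h = (φ (ρ h (b k))).coeff h := rfl

noncomputable def auxQ {R : Type} [CommRing R] {G : Type} [Group G] {V : Type} [AddCommGroup V] [Module R V]
    (ρ : Representation R G V) {κ : Type} [Fintype κ] (b : Module.Basis κ R V) (k : κ) :
    MonoidAlgebra R G →ₗ[R] (V →ₗ[R] MonoidAlgebra R G) :=
  LinearMap.mk₂ R (fun w v => MonoidAlgebra.ofCoeff (Finsupp.onFinset w.coeff.support
      (fun h => w.coeff h * b.repr (ρ h⁻¹ v) k) (by
        intro h hh
        rw [Finsupp.mem_support_iff]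
        exact left_ne_zero_of_mul hh)))
    (by intros; ext h; simp [add_mul])
    (by intros; ext h; simp [mul_assoc])
    (by intros; ext h; simp [mul_add])
    (by intros; ext h; simp [mul_left_comm])

theorem auxQ_coeff {R : Type} [CommRing R] {G : Type} [Group G] {V : Type} [AddCommGroup V] [Module R V]
    (ρ : Representation R G V) {κ : Type} [Fintype κ] (b : Module.Basis κ R V) (k : κ)
    (w : MonoidAlgebra R G) (v : V) (h : G) :
    (auxQ ρ b k w v).coeff h = w.coeff h * b.repr (ρ h⁻¹ v) k := rfl

theorem auxPQ {R : Type} [CommRing R] {G : Type} [Group G] {V : Type} [AddCommGroup V] [Module R V]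
    (ρ : Representation R G V) {κ : Type} [Fintype κ] (b : Module.Basis κ R V)
    (φ : V →ₗ[R] MonoidAlgebra R G) : ∑ k, auxQ ρ b k (auxP ρ b k φ) = φ := by
  ext v h
  rw [LinearMap.sum_apply, MonoidAlgebra.coeff_sum, Finsupp.finsetSum_apply]
  have hv : v = ∑ k, b.repr (ρ h⁻¹ v) k • ρ h (b k) := by
    have := congrArg (ρ h) (b.sum_repr (ρ h⁻¹ v))
    rw [map_sum, Representation.self_inv_apply] at this
    simpa using this.symm
  conv_rhs => rw [hv]
  rw [map_sum, MonoidAlgebra.coeff_sum, Finsupp.finsetSum_apply]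
  refine Finset.sum_congr rfl fun k _ => ?_
  rw [auxQ_coeff, auxP_coeff, map_smul, MonoidAlgebra.coeff_smul, Finsupp.smul_apply, smul_eq_mul,
    mul_comm]

theorem aux_retract {R : Type} [CommRing R] {G : Type} [Group G] (F : Rep.{0} R G) {κ : Type} [Fintype κ]
    (b : Module.Basis κ R F.V) :
    ∃ (p : κ → ((Rep.ihom F).obj (Rep.ofMulAction R G G) ⟶ Rep.ofMulAction R G G))
      (q : κ → (Rep.ofMulAction R G G ⟶ (Rep.ihom F).obj (Rep.ofMulAction R G G))),
      ∑ k, p k ≫ q k = 𝟙 _ := by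
  refine ⟨fun k => Rep.ofHom ⟨auxP F.ρ b k, ?_⟩, fun k => Rep.ofHom ⟨auxQ F.ρ b k, ?_⟩, ?_⟩
  · intro g
    refine LinearMap.ext fun φ => ?_
    change auxP F.ρ b k (Representation.ofMulAction R G G g ∘ₗ φ ∘ₗ F.ρ g⁻¹) =
      Representation.ofMulAction R G G g (auxP F.ρ b k φ)
    ext h
    rw [auxP_coeff, Representation.coeff_ofMulAction, auxP_coeff, LinearMap.comp_apply,
      LinearMap.comp_apply, Representation.coeff_ofMulAction, smul_eq_mul, map_mul F.ρ]
    rfl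
  · intro g
    refine LinearMap.ext fun w => LinearMap.ext fun v => ?_
    change auxQ F.ρ b k (Representation.ofMulAction R G G g w) v =
      Representation.ofMulAction R G G g (auxQ F.ρ b k w (F.ρ g⁻¹ v))
    ext h
    rw [auxQ_coeff, Representation.coeff_ofMulAction, Representation.coeff_ofMulAction, auxQ_coeff,
      ← Module.End.mul_apply, ← map_mul]
    simp
  · apply Rep.hom_ext
    apply Representation.IntertwiningMap.ext
    refine LinearMap.ext fun φ => ?_
    refine Eq.trans ?_ (auxPQ F.ρ b φ)
    rw [Rep.sum_hom, Representation.IntertwiningMap.toLinearMap_sum]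
    exact LinearMap.sum_apply _ _ _

/-- The underlying module is free of finite rank. -/
def AuxLat {R : Type} [CommRing R] {G : Type} [Group G] (F : Rep.{0} R G) : Prop :=
  Module.Free R F.V ∧ Module.Finite R F.V

open MonoidalCategory in
theorem aux_tensor_mono {R : Type} [CommRing R] {G : Type} [Group G] (F : Rep.{0} R G)
    (hF : AuxLat F) : (tensorLeft F).PreservesMonomorphisms := by
  have := hF.1
  constructor
  intro X Y f hf
  rw [Rep.mono_iff_injective] at hf ⊢
  have := Module.Flat.lTensor_preserves_injective_linearMap (M := F.V) f.hom.toLinearMap hf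
  exact this

theorem aux_ihom_epi {R : Type} [CommRing R] {G : Type} [Group G] (F : Rep.{0} R G)
    (hF : AuxLat F) : (Rep.ihom F).PreservesEpimorphisms := by
  have := hF.1
  constructor
  intro X Y f hf
  rw [Rep.epi_iff_surjective] at hf ⊢
  intro φ
  obtain ⟨ψ, hψ⟩ := Module.projective_lifting_property f.hom.toLinearMap
    (show F.V →ₗ[R] Y.V from φ) hf
  exact ⟨ψ, hψ⟩

open MonoidalCategory in
noncomputable def auxAdj {R : Type} [CommRing R] {G : Type} [Group G] (F : Rep.{0} R G) :
    (tensorLeft F ⋙ Rep.toModuleMonoidAlgebra) ⊣ (Rep.ofModuleMonoidAlgebra ⋙ Rep.ihom F) :=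
  (ihom.adjunction F).comp (Rep.equivalenceModuleMonoidAlgebra (k := R) (G := G)).toAdjunction

noncomputable def auxIso (R : Type) [CommRing R] (G : Type) [Group G] :
    Rep.toModuleMonoidAlgebra.obj (Rep.ofMulAction R G G) ≅
      ModuleCat.of (MonoidAlgebra R G) (MonoidAlgebra R G) :=
  LinearEquiv.toModuleIso Representation.ofMulActionSelfAsModuleEquiv

noncomputable def auxIso2 (R : Type) [CommRing R] (G : Type) [Group G] :
    Rep.ofMulAction R G G ≅ Rep.ofModuleMonoidAlgebra.obj
      (ModuleCat.of (MonoidAlgebra R G) (MonoidAlgebra R G)) :=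
  Rep.unitIso _ ≪≫ Rep.ofModuleMonoidAlgebra.mapIso (auxIso R G)

theorem aux_retract2 {R : Type} [CommRing R] {G : Type} [Group G] (F : Rep.{0} R G)
    (hF : AuxLat F) :
    ∃ (κ : Type) (_ : Fintype κ) (p : κ → ((Rep.ofModuleMonoidAlgebra ⋙ Rep.ihom F).obj
        (ModuleCat.of (MonoidAlgebra R G) (MonoidAlgebra R G)) ⟶ Rep.ofMulAction R G G))
      (q : κ → (Rep.ofMulAction R G G ⟶ (Rep.ofModuleMonoidAlgebra ⋙ Rep.ihom F).obj
        (ModuleCat.of (MonoidAlgebra R G) (MonoidAlgebra R G)))),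
      ∑ k, p k ≫ q k = 𝟙 _ := by
  have := hF.1
  have := hF.2
  obtain ⟨p, q, h⟩ := aux_retract F (Module.Free.chooseBasis R F.V)
  let e := (Rep.ihom F).mapIso (auxIso2 R G)
  refine ⟨_, inferInstance, fun k => e.inv ≫ p k, fun k => q k ≫ e.hom, ?_⟩
  have h2 : e.inv ≫ (∑ k, p k ≫ q k) ≫ e.hom = 𝟙 _ := by
    rw [h, Category.id_comp, e.inv_hom_id]
  refine Eq.trans ?_ h2
  rw [Preadditive.sum_comp, Preadditive.comp_sum]
  simp only [Category.assoc]

open MonoidalCategory in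
theorem aux_lattice {G : Type} [Group G] [HasExt.{0} (ModuleCat.{0} (MonoidAlgebra ℤ G))]
    (F : Rep.{0} ℤ G) (hF : AuxLat F) (j : ℕ)
    (h : AddGroup.FG (groupCohomology (Rep.ofMulAction ℤ G G) j)) :
    AddGroup.FG (Abelian.Ext (Rep.toModuleMonoidAlgebra.obj F)
      (ModuleCat.of (MonoidAlgebra ℤ G) (MonoidAlgebra ℤ G)) j) := by
  have hm := aux_tensor_mono F hF
  have he := aux_ihom_epi F hF
  obtain ⟨κ, _, p, q, hpq⟩ := aux_retract2 F hF
  let P := Rep.standardResolution ℤ G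
  have hK : AddGroup.FG ((P.complex.linearYonedaObj ℤ (Rep.ofMulAction ℤ G G)).homology j) := by
    have e := (groupCohomologyIso (Rep.ofMulAction ℤ G G) j P).toLinearEquiv
    exact AddGroup.fg_of_surjective (f := e.toAddEquiv.toAddMonoidHom) e.surjective
  have hadd : (Rep.toModuleMonoidAlgebra (k := ℤ) (G := G)).Additive := 
    Functor.additive_of_preserves_binary_products _
  have hL : (tensorLeft F ⋙ Rep.toModuleMonoidAlgebra).Additive := inferInstance
  have : (tensorLeft F ⋙ Rep.toModuleMonoidAlgebra).PreservesMonomorphisms := inferInstance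
  have : (tensorLeft F ⋙ Rep.toModuleMonoidAlgebra).IsLeftAdjoint := (auxAdj F).isLeftAdjoint
  have : Limits.PreservesColimits (tensorLeft F ⋙ Rep.toModuleMonoidAlgebra) := (auxAdj F).leftAdjoint_preservesColimits
  have hP : (tensorLeft F ⋙ Rep.toModuleMonoidAlgebra).PreservesHomology :=
    Functor.preservesHomology_of_preservesMonos_and_cokernels _
  have : (Rep.ofModuleMonoidAlgebra ⋙ Rep.ihom F).PreservesEpimorphisms := inferInstance
  have key := aux_ext_fg (auxAdj F) P (Rep.ofMulAction ℤ G G)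
    (ModuleCat.of (MonoidAlgebra ℤ G) (MonoidAlgebra ℤ G)) p q hpq j hK
  have e : (tensorLeft F ⋙ Rep.toModuleMonoidAlgebra).obj (Rep.trivial ℤ G ℤ) ≅
      Rep.toModuleMonoidAlgebra.obj F := Rep.toModuleMonoidAlgebra.mapIso (ρ_ F)
  refine AddGroup.fg_of_surjective
    (f := (Abelian.Ext.mk₀ e.inv).precomp (ModuleCat.of (MonoidAlgebra ℤ G) (MonoidAlgebra ℤ G)) (zero_add j)) ?_
  intro y
  refine ⟨(Abelian.Ext.mk₀ e.hom).precomp _ (zero_add j) y, ?_⟩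
  simp

theorem aux_cover {R : Type} [CommRing R] [IsDomain R] [IsPrincipalIdealRing R]
    {G : Type} [Group G] (A : Rep.{0} R G) [Finite A.V] :
    ∃ (F₁ F₀ : Rep.{0} R G) (f : F₁ ⟶ F₀) (g : F₀ ⟶ A) (w : f ≫ g = 0),
      AuxLat F₁ ∧ AuxLat F₀ ∧ (ShortComplex.mk f g w).ShortExact := by
  let ρ₀ : Representation R G (A.V →₀ R) :=
    { toFun := fun g => Finsupp.lmapDomain R R (A.ρ g)
      map_one' := by
        ext
        simp
      map_mul' := by
        intro g h
        ext
        simp }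
  let F₀ : Rep.{0} R G := Rep.of ρ₀
  let g : F₀ ⟶ A := Rep.ofHom ⟨Finsupp.linearCombination R (id : A.V → A.V), by
    intro g
    refine Finsupp.lhom_ext' fun a => LinearMap.ext_ring ?_
    simp [ρ₀]⟩
  have h0 : AuxLat F₀ :=
    ⟨inferInstanceAs (Module.Free R (A.V →₀ R)), inferInstanceAs (Module.Finite R (A.V →₀ R))⟩
  have hg : Epi g := by
    rw [Rep.epi_iff_surjective]
    intro a
    refine ⟨Finsupp.single a 1, ?_⟩
    exact (Finsupp.linearCombination_single R 1 a).trans (one_smul _ _)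
  refine ⟨Limits.kernel g, F₀, Limits.kernel.ι g, g, Limits.kernel.condition g, ?_, h0, ?_⟩
  · have hi : Function.Injective (Limits.kernel.ι g).hom.toLinearMap :=
      (Rep.mono_iff_injective _).1 inferInstance
    have := h0.1
    have := h0.2
    have e := LinearEquiv.ofInjective _ hi
    exact ⟨Module.Free.of_equiv e.symm, Module.Finite.equiv e.symm⟩
  · have : Mono (ShortComplex.mk (Limits.kernel.ι g) g (Limits.kernel.condition g)).f :=
      inferInstanceAs (Mono (Limits.kernel.ι g))
    have : Epi (ShortComplex.mk (Limits.kernel.ι g) g (Limits.kernel.condition g)).g := hg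
    exact ⟨ShortComplex.exact_of_f_is_kernel _ (Limits.kernelIsKernel g)⟩

theorem aux_hom_zero {G : Type} [Group G] (A : Type) [AddCommGroup A]
    [Module (MonoidAlgebra ℤ G) A] [Finite A]
    (f : ModuleCat.of (MonoidAlgebra ℤ G) A ⟶
      ModuleCat.of (MonoidAlgebra ℤ G) (MonoidAlgebra ℤ G)) : f = 0 := by
  refine ModuleCat.hom_ext (LinearMap.ext fun a => ?_)
  have h1 : Nat.card A • a = 0 := card_nsmul_eq_zero'
  have h2 : Nat.card A • (f.hom a : MonoidAlgebra ℤ G) = 0 := by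
    have := congrArg f.hom h1
    rw [map_nsmul, map_zero] at this
    exact this
  have h3 : Nat.card A ≠ 0 := Nat.card_pos.ne'
  change (f.hom a : MonoidAlgebra ℤ G) = 0
  ext h
  let φ : MonoidAlgebra ℤ G →+ ℤ := AddMonoidHom.mk' (fun x => x.coeff h) (fun _ _ => by simp)
  have h4 := congrArg φ h2
  rw [map_nsmul, map_zero, smul_eq_zero] at h4
  exact h4.resolve_left h3

theorem aux_ext_succ {G : Type} [Group G] [HasExt.{0} (ModuleCat.{0} (MonoidAlgebra ℤ G))] (n : ℕ)
    (h1 : AddGroup.FG (groupCohomology (Rep.ofMulAction ℤ G G) (n + 1)))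
    (h2 : AddGroup.FG (groupCohomology (Rep.ofMulAction ℤ G G) n))
    (A : Type) [AddCommGroup A] [Module (MonoidAlgebra ℤ G) A] [Finite A] :
    AddGroup.FG (Abelian.Ext (ModuleCat.of (MonoidAlgebra ℤ G) A)
      (ModuleCat.of (MonoidAlgebra ℤ G) (MonoidAlgebra ℤ G)) (n + 1)) := by
  let B : Rep.{0} ℤ G := Rep.ofModuleMonoidAlgebra.obj (ModuleCat.of (MonoidAlgebra ℤ G) A)
  have : Finite B.V := inferInstanceAs (Finite A)
  obtain ⟨F₁, F₀, f, g, w, hF₁, hF₀, hS⟩ := aux_cover B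
  have hadd : (Rep.toModuleMonoidAlgebra (k := ℤ) (G := G)).Additive :=
    Functor.additive_of_preserves_binary_products _
  have hS' := hS.map_of_exact (Rep.toModuleMonoidAlgebra (k := ℤ) (G := G))
  have key := aux_les_fg hS' (ModuleCat.of (MonoidAlgebra ℤ G) (MonoidAlgebra ℤ G)) n
    (aux_lattice F₁ hF₁ n h2) (aux_lattice F₀ hF₀ (n + 1) h1)
  have e : Rep.toModuleMonoidAlgebra.obj B ≅ ModuleCat.of (MonoidAlgebra ℤ G) A :=
    Rep.counitIso _
  refine AddGroup.fg_of_surjective (G := Abelian.Ext (Rep.toModuleMonoidAlgebra.obj B)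
      (ModuleCat.of (MonoidAlgebra ℤ G) (MonoidAlgebra ℤ G)) (n + 1)) (hG := key)
    (f := (Abelian.Ext.mk₀ e.inv).precomp
      (ModuleCat.of (MonoidAlgebra ℤ G) (MonoidAlgebra ℤ G)) (zero_add (n + 1))) ?_
  intro y
  refine ⟨(Abelian.Ext.mk₀ e.hom).precomp _ (zero_add (n + 1)) y, ?_⟩
  simp

/-- If `H^i(G, ℤG)` and `H^{i-1}(G, ℤG)` are finitely generated abelian groups and `A` is a
`ℤG`-module whose underlying abelian group is finite, then `Ext^i_{ℤG}(A, ℤG)` is a finitely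
generated abelian group. -/
theorem stmt3 (G : Type) [Group G] (i : ℕ)
    (h1 : AddGroup.FG (groupCohomology (Rep.ofMulAction ℤ G G) i))
    (h2 : AddGroup.FG (groupCohomology (Rep.ofMulAction ℤ G G) (i - 1)))
    (A : Type) [AddCommGroup A] [Module (MonoidAlgebra ℤ G) A] [Finite A] :
    AddGroup.FG (extZG G i A) := by
  cases i with
  | zero => exact aux_zero_fg _ _ (aux_hom_zero A)
  | succ n =>
    have : HasExt.{0} (ModuleCat.{0} (MonoidAlgebra ℤ G)) := inferInstance
    exact aux_old_of_new _ _ n (aux_ext_succ n h1 h2 A)
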